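/- Let 1<p<∞ and let f be locally integrable on (0,∞). Suppose there is a constant C such that |∫_0^∞ f·φ'| ≤ C·‖φ/v₁‖_{p'} for all φ∈C_0^∞(0,∞), where v₁ is a weight with 1/v₁ locally in L^{p'}. Then f coincides a.e. with a locally absolutely continuous function f̃ whose derivative satisfies ‖v₁·f̃'‖_p ≤ C. -/

import Mathlib

open MeasureTheory Set

open Filter Topology ENNReal in
theorem rz_exists_signed {α : Type*} [MeasurableSpace α] (ν : Measure α) [IsFiniteMeasure ν]
    (Q : ENNReal) [Fact (1 ≤ Q)] (hQ : Q ≠ ⊤) (L : Lp ℝ Q ν →L[ℝ] ℝ) :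
    ∃ k : α → ℝ, Measurable k ∧ Integrable k ν ∧ ∀ (A : Set α) (hA : MeasurableSet A),
      L (indicatorConstLp Q hA (measure_ne_top ν A) (1:ℝ)) = ∫ x in A, k x ∂ν := by
  classical
  let m : Set α → ℝ := fun A => if hA : MeasurableSet A then
    L (indicatorConstLp Q hA (measure_ne_top ν A) (1:ℝ)) else 0
  have mdef : ∀ A (hA : MeasurableSet A), m A = L (indicatorConstLp Q hA (measure_ne_top ν A) (1:ℝ)) := by
    intro A hA; simp [m, hA]
  have mempty : m ∅ = 0 := by
    rw [mdef _ MeasurableSet.empty]; simp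
  let s : SignedMeasure α :=
    { measureOf' := m
      empty' := mempty
      not_measurable' := fun A hA => by simp [m, hA]
      m_iUnion' := by
        intro f hf hd
        have hfin : ∀ t : Finset ℕ, MeasurableSet (⋃ i ∈ t, f i) := fun t =>
          Finset.measurableSet_biUnion t (fun i _ => hf i)
        have hsum : ∀ t : Finset ℕ, ∑ i ∈ t, m (f i) = m (⋃ i ∈ t, f i) := by
          intro t
          induction t using Finset.induction_on with
          | empty => simp [mempty]
          | insert a t ha ih =>
            rw [Finset.sum_insert ha, ih, mdef _ (hf a), mdef _ (hfin t), ← map_add,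
              ← indicatorConstLp_disjoint_union, ← mdef, Finset.set_biUnion_insert]
            rw [Set.disjoint_iUnion₂_right]
            intro i hi
            exact hd (by rintro rfl; exact ha hi)
        unfold HasSum
        simp only [hsum, SummationFilter.unconditional_filter]
        rw [mdef _ (MeasurableSet.iUnion hf)]
        have : (fun t : Finset ℕ => m (⋃ i ∈ t, f i)) = fun t =>
          L (indicatorConstLp Q (hfin t) (measure_ne_top ν _) (1:ℝ)) := by
          ext t; rw [mdef _ (hfin t)]
        rw [this]
        refine (L.continuous.tendsto _).comp ?_
        refine tendsto_indicatorConstLp_set hQ ?_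
        have h1 : ∑' i, ν (f i) ≠ ⊤ := by
          rw [← measure_iUnion hd hf]; exact measure_ne_top _ _
        refine tendsto_of_tendsto_of_tendsto_of_le_of_le tendsto_const_nhds
          (ENNReal.tendsto_tsum_compl_atTop_zero h1) (fun _ => zero_le) ?_
        intro t
        refine (measure_mono ?_).trans (measure_iUnion_le (fun b : {x // x ∉ t} => f b))
        intro x hx
        rcases hx with ⟨h1, h2⟩ | ⟨h1, h2⟩
        · simp only [mem_iUnion] at h1 h2
          obtain ⟨i, _, hi⟩ := h1
          exact absurd ⟨i, hi⟩ h2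
        · simp only [mem_iUnion] at h1 h2 ⊢
          obtain ⟨i, hi⟩ := h1
          exact ⟨⟨i, fun hit => h2 ⟨i, hit, hi⟩⟩, hi⟩ }
  have hs : s ≪ᵥ ν.toENNRealVectorMeasure := by
    refine VectorMeasure.AbsolutelyContinuous.mk ?_
    intro A hA h0
    rw [Measure.toENNRealVectorMeasure_apply_measurable hA] at h0
    change m A = 0
    rw [mdef A hA]
    have : indicatorConstLp Q hA (measure_ne_top ν A) (1:ℝ) = 0 := by
      rw [← indicatorConstLp_empty (p := Q) (μ := ν) (c := (1:ℝ)),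
        indicatorConstLp_inj hA _ _ _ one_ne_zero]
      exact ae_eq_empty.2 h0
    rw [this, map_zero]
  have h := SignedMeasure.withDensityᵥ_rnDeriv_eq s ν hs
  refine ⟨s.rnDeriv ν, s.measurable_rnDeriv ν, s.integrable_rnDeriv ν, fun A hA => ?_⟩
  rw [← withDensityᵥ_apply (s.integrable_rnDeriv ν) hA, h, ← mdef A hA]
  rfl

open Filter Topology ENNReal in
theorem rz_repr {α : Type*} [MeasurableSpace α] (ν : Measure α) [IsFiniteMeasure ν]
    (P Q : ENNReal) [Fact (1 ≤ P)] [Fact (1 ≤ Q)] [HolderConjugate P Q]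
    (hQ : Q ≠ ⊤) (L : Lp ℝ Q ν →L[ℝ] ℝ)
    (k : α → ℝ) (hk : MemLp k P ν) (h : ∀ (A : Set α) (hA : MeasurableSet A),
      L (indicatorConstLp Q hA (measure_ne_top ν A) (1:ℝ)) = ∫ x in A, k x ∂ν) :
    ∀ β : Lp ℝ Q ν, L β = ∫ x, k x * β x ∂ν := by
  set B : Lp ℝ Q ν →L[ℝ] ℝ := (ContinuousLinearMap.mul ℝ ℝ).lpPairing ν P Q (hk.toLp k) with hB
  have hBe : ∀ β : Lp ℝ Q ν, B β = ∫ x, k x * β x ∂ν := by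
    intro β
    rw [hB, ContinuousLinearMap.lpPairing_eq_integral]
    refine integral_congr_ae ?_
    filter_upwards [hk.coeFn_toLp] with x hx
    simp [hx]
  suffices hs : ∀ β, L β = B β by intro β; rw [hs, hBe]
  intro β
  refine Lp.induction hQ (motive := fun β => L β = B β) ?_ ?_ ?_ β
  · intro c A hA hfin
    have e : (↑(Lp.simpleFunc.indicatorConst Q hA hfin.ne c) : Lp ℝ Q ν) =
        c • indicatorConstLp Q hA (measure_ne_top ν A) (1:ℝ) := by
      rw [Lp.simpleFunc.coe_indicatorConst]
      ext1
      grw [Lp.coeFn_smul, indicatorConstLp_coeFn, indicatorConstLp_coeFn]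
      refine Eventually.of_forall fun x => ?_
      by_cases hx : x ∈ A <;> simp [hx]
    rw [e, map_smul, map_smul, h A hA, hBe]
    congr 1
    rw [← integral_indicator hA]
    refine integral_congr_ae ?_
    filter_upwards [indicatorConstLp_coeFn (p := Q) (hs := hA) (hμs := measure_ne_top ν A) (c := (1:ℝ))] with x hx
    rw [hx]
    by_cases hx : x ∈ A <;> simp [hx]
  · intro f g hf hg _ h1 h2
    rw [map_add, map_add, h1, h2]
  · exact isClosed_eq L.continuous B.continuous

open Filter Topology ENNReal in
theorem rz_norm {α : Type*} [MeasurableSpace α] (ν : Measure α) [IsFiniteMeasure ν]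
    (p q : ℝ) (hpq : p.HolderConjugate q) [Fact (1 ≤ ENNReal.ofReal q)]
    (L : Lp ℝ (ENNReal.ofReal q) ν →L[ℝ] ℝ)
    (k : α → ℝ) (hkm : Measurable k) (hk : MemLp k (ENNReal.ofReal p) ν)
    (h : ∀ β : Lp ℝ (ENNReal.ofReal q) ν, L β = ∫ x, k x * β x ∂ν) :
    eLpNorm k (ENNReal.ofReal p) ν ≤ ENNReal.ofReal ‖L‖ := by
  have hp0 := hpq.pos
  have hq0 := hpq.symm.pos
  have hp1 := hpq.lt
  have hP0 : ENNReal.ofReal p ≠ 0 := by simpa using hp0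
  have hQ0 : ENNReal.ofReal q ≠ 0 := by simpa using hq0
  set β : α → ℝ := fun x => SignType.sign (k x) * |k x| ^ (p-1) with hβ
  have hβm : Measurable β := by
    have : Measurable (fun x => (SignType.sign (k x) : ℝ)) := by
      have : (fun x => (SignType.sign (k x) : ℝ)) = fun x => (if 0 < k x then (1:ℝ) else if k x < 0 then -1 else 0) := by
        ext x
        rcases lt_trichotomy (k x) 0 with h | h | h
        · simp [h, not_lt.2 h.le]
        · simp [h]
        · simp [h]
      rw [this]
      refine Measurable.ite (measurableSet_lt measurable_const hkm) measurable_const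
        (Measurable.ite (measurableSet_lt hkm measurable_const) measurable_const measurable_const)
    exact this.mul (hkm.abs.pow_const _)
  have habs : ∀ x, |β x| ^ q = |k x| ^ p := by
    intro x
    rcases eq_or_ne (k x) 0 with h | h
    · simp [hβ, h, Real.zero_rpow hp0.ne', Real.zero_rpow hq0.ne']
    · have : |(SignType.sign (k x) : ℝ)| = 1 := by
        rcases lt_or_gt_of_ne h with h | h <;> simp [h]
      rw [hβ]; simp only [abs_mul, this, one_mul]
      rw [abs_of_nonneg (by positivity), ← Real.rpow_mul (abs_nonneg _), hpq.sub_one_mul_conj]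
  have hkβ : ∀ x, k x * β x = |k x| ^ p := by
    intro x
    rw [hβ]; simp only
    rw [← mul_assoc, self_mul_sign]
    rcases eq_or_ne (k x) 0 with h | h
    · simp [h, Real.zero_rpow hp0.ne']
    · rw [← Real.rpow_one_add' (abs_nonneg _) (by simpa using hp0.ne')]; ring_nf
  have hint : Integrable (fun x => |k x| ^ p) ν := by
    have := hk.integrable_norm_rpow hP0 ofReal_ne_top
    simpa [ENNReal.toReal_ofReal hp0.le] using this
  have hβL : MemLp β (ENNReal.ofReal q) ν := by
    rw [← integrable_norm_rpow_iff hβm.aestronglyMeasurable hQ0 ofReal_ne_top]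
    simpa [ENNReal.toReal_ofReal hq0.le, habs] using hint
  set I := ∫ x, |k x| ^ p ∂ν with hI
  have hI0 : 0 ≤ I := integral_nonneg fun x => by positivity
  have hLβ : L (hβL.toLp β) = I := by
    rw [h, hI]
    refine integral_congr_ae ?_
    filter_upwards [hβL.coeFn_toLp] with x hx
    rw [hx, hkβ]
  have hnβ : ‖hβL.toLp β‖ = I ^ (1/q) := by
    rw [Lp.norm_toLp, hβL.eLpNorm_eq_integral_rpow_norm hQ0 ofReal_ne_top,
      ENNReal.toReal_ofReal (by positivity)]
    simp [ENNReal.toReal_ofReal hq0.le, habs, hI]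
  have hle : I ≤ ‖L‖ * I ^ (1/q) := by
    have := L.le_opNorm (hβL.toLp β)
    rw [hnβ, hLβ] at this
    exact (le_abs_self _).trans this
  rw [hk.eLpNorm_eq_integral_rpow_norm hP0 ofReal_ne_top]
  refine ENNReal.ofReal_le_ofReal ?_
  simp only [ENNReal.toReal_ofReal hp0.le, Real.norm_eq_abs]
  rw [← hI]
  rcases hI0.eq_or_lt with h0 | h0
  · rw [← h0, Real.zero_rpow (by positivity)]; positivity
  · have hpos : 0 < I ^ (1/q) := by positivity
    rw [← mul_le_mul_iff_left₀ hpos, ← Real.rpow_add h0]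
    have : p⁻¹ + 1/q = 1 := by have := hpq.inv_add_inv_eq_one; rw [one_div]; exact this
    rw [this, Real.rpow_one]; exact hle

open Filter Topology ENNReal in
theorem rz_ind0 {α : Type*} [MeasurableSpace α] (ν : Measure α)
    (Q : ENNReal) [Fact (1 ≤ Q)] (E : Set α) (hE : MeasurableSet E) :
    ∃ M : Lp ℝ Q ν →ₗ[ℝ] Lp ℝ Q ν, ∀ f : Lp ℝ Q ν, M f =ᵐ[ν] E.indicator f := by
  have key : ∃ T : Lp ℝ Q ν → Lp ℝ Q ν, ∀ f : Lp ℝ Q ν, T f =ᵐ[ν] E.indicator f :=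
    ⟨fun f => ((Lp.memLp f).indicator hE).toLp, fun f => MemLp.coeFn_toLp _⟩
  obtain ⟨T, hT⟩ := key
  have hadd : ∀ f g, T (f + g) = T f + T g := by
    intro f g
    apply Lp.ext
    filter_upwards [Lp.coeFn_add f g, Lp.coeFn_add (T f) (T g), hT f, hT g, hT (f + g)]
      with x h1 h2 h3 h4 h5
    rw [h5, h2, Pi.add_apply, h3, h4]
    by_cases h : x ∈ E
    · simp only [Set.indicator_of_mem h]; exact h1
    · simp [h]
  have hsmul : ∀ (c : ℝ) f, T (c • f) = c • T f := by
    intro c f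
    apply Lp.ext
    filter_upwards [Lp.coeFn_smul c f, Lp.coeFn_smul c (T f), hT f, hT (c • f)]
      with x h1 h2 h3 h5
    rw [h5, h2, Pi.smul_apply, h3]
    by_cases h : x ∈ E
    · simp only [Set.indicator_of_mem h]; exact h1
    · simp [h]
  exact ⟨{ toFun := T, map_add' := hadd, map_smul' := hsmul }, hT⟩

open Filter Topology ENNReal in
theorem rz_ind {α : Type*} [MeasurableSpace α] (ν : Measure α)
    (Q : ENNReal) [Fact (1 ≤ Q)] (E : Set α) (hE : MeasurableSet E) :
    ∃ M : Lp ℝ Q ν →L[ℝ] Lp ℝ Q ν, ‖M‖ ≤ 1 ∧ ∀ f : Lp ℝ Q ν, M f =ᵐ[ν] E.indicator f := by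
  obtain ⟨M0, hM0⟩ := rz_ind0 ν Q E hE
  have hb : ∀ f, ‖M0 f‖ ≤ 1 * ‖f‖ := by
    intro f
    rw [one_mul, Lp.norm_def, Lp.norm_def, eLpNorm_congr_ae (hM0 f)]
    exact ENNReal.toReal_mono (Lp.eLpNorm_ne_top f) (eLpNorm_indicator_le _)
  refine ⟨M0.mkContinuous 1 hb, LinearMap.mkContinuous_norm_le _ zero_le_one _, fun f => ?_⟩
  rw [LinearMap.mkContinuous_apply]
  exact hM0 f

open Filter Topology ENNReal in
theorem rz_main {α : Type*} [MeasurableSpace α] (ν : Measure α) [IsFiniteMeasure ν]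
    (p q : ℝ) (hpq : p.HolderConjugate q) [Fact (1 ≤ ENNReal.ofReal q)]
    (L : Lp ℝ (ENNReal.ofReal q) ν →L[ℝ] ℝ) :
    ∃ k : α → ℝ, Measurable k ∧ eLpNorm k (ENNReal.ofReal p) ν ≤ ENNReal.ofReal ‖L‖ ∧
      ∀ β : Lp ℝ (ENNReal.ofReal q) ν, L β = ∫ x, k x * β x ∂ν := by
  have : Fact (1 ≤ ENNReal.ofReal p) := ⟨by simpa using hpq.lt.le⟩
  have : HolderConjugate (ENNReal.ofReal p) (ENNReal.ofReal q) := hpq.ennrealOfReal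
  obtain ⟨k, hkm, hki, hk⟩ := rz_exists_signed ν (ENNReal.ofReal q) ofReal_ne_top L
  suffices hn : eLpNorm k (ENNReal.ofReal p) ν ≤ ENNReal.ofReal ‖L‖ from
    ⟨k, hkm, hn, rz_repr ν (ENNReal.ofReal p) _ ofReal_ne_top L k
      ⟨hkm.aestronglyMeasurable, hn.trans_lt ofReal_lt_top⟩ hk⟩
  let E : ℕ → Set α := fun n => {x | |k x| ≤ n}
  have hE : ∀ n, MeasurableSet (E n) := fun n => measurableSet_le hkm.abs measurable_const
  have hb : ∀ n, eLpNorm ((E n).indicator k) (ENNReal.ofReal p) ν ≤ ENNReal.ofReal ‖L‖ := by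
    intro n
    obtain ⟨M, hM, hMf⟩ := rz_ind ν (ENNReal.ofReal q) (E n) (hE n)
    have hkn : MemLp ((E n).indicator k) (ENNReal.ofReal p) ν := by
      refine MemLp.of_bound (hkm.indicator (hE n)).aestronglyMeasurable n (Eventually.of_forall ?_)
      intro x
      by_cases h : x ∈ E n
      · rw [Set.indicator_of_mem h]; exact h
      · simp [h]
    have h1 := rz_repr ν (ENNReal.ofReal p) (ENNReal.ofReal q) ofReal_ne_top (L.comp M)
      ((E n).indicator k) hkn (by
        intro A hA
        have : M (indicatorConstLp (ENNReal.ofReal q) hA (measure_ne_top ν A) (1:ℝ)) =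
            indicatorConstLp (ENNReal.ofReal q) (hA.inter (hE n)) (measure_ne_top ν _) (1:ℝ) := by
          ext1
          filter_upwards [hMf (indicatorConstLp (ENNReal.ofReal q) hA (measure_ne_top ν A) (1:ℝ)),
            indicatorConstLp_coeFn (p := ENNReal.ofReal q) (hs := hA)
            (hμs := measure_ne_top ν A) (c := (1:ℝ)),
            indicatorConstLp_coeFn (p := ENNReal.ofReal q) (hs := hA.inter (hE n))
            (hμs := measure_ne_top ν _) (c := (1:ℝ))] with x hx hx2 hx3
          rw [hx, hx3]
          by_cases h : x ∈ E n
          · rw [Set.indicator_of_mem h, hx2]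
            by_cases h' : x ∈ A <;> simp [h, h']
          · simp [h]
        rw [ContinuousLinearMap.comp_apply, this, hk, setIntegral_indicator (hE n)])
    refine (rz_norm ν p q hpq _ _ (hkm.indicator (hE n)) hkn h1).trans (ENNReal.ofReal_le_ofReal ?_)
    refine (L.opNorm_comp_le M).trans ?_
    exact mul_le_of_le_one_right (norm_nonneg _) hM
  refine (Lp.eLpNorm_lim_le_liminf_eLpNorm (f := fun n => (E n).indicator k)
    (fun n => (hkm.indicator (hE n)).aestronglyMeasurable) k (Eventually.of_forall ?_)).trans ?_
  · intro x
    refine tendsto_const_nhds.congr' ?_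
    filter_upwards [eventually_ge_atTop ⌈|k x|⌉₊] with n hn
    have : x ∈ E n := (Nat.le_ceil |k x|).trans (Nat.cast_le.2 hn)
    simp [this]
  · refine liminf_le_of_le (by isBoundedDefault) (fun b hb' => ?_)
    obtain ⟨n, hn⟩ := hb'.exists
    exact hn.trans (hb n)

theorem db_bounds {K : Set ℝ} (hK : IsCompact K) (h : K ⊆ Ioi 0) :
    ∃ a b : ℝ, 0 < a ∧ a < 1 ∧ 1 < b ∧ K ⊆ Ioo a b := by
  have hc : IsCompact (insert 1 K) := hK.insert 1
  obtain ⟨a, ha⟩ := hc.exists_isLeast (insert_nonempty _ _)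
  obtain ⟨b, hb⟩ := hc.exists_isGreatest (insert_nonempty _ _)
  have h0 : 0 < a := by
    rcases ha.1 with h1 | h1
    · rw [h1]; exact one_pos
    · exact h h1
  have ha1 : a ≤ 1 := ha.2 (mem_insert _ _)
  have hb1 : 1 ≤ b := hb.2 (mem_insert _ _)
  refine ⟨a/2, b+1, by linarith, by linarith, by linarith, fun x hx => ?_⟩
  have h1 := ha.2 (mem_insert_of_mem _ hx)
  have h2 := hb.2 (mem_insert_of_mem _ hx)
  exact ⟨by linarith, by linarith⟩

theorem db_int_mul {F g : ℝ → ℝ} (hF : LocallyIntegrableOn F (Ioi 0)) (hg : Continuous g)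
    (hc : HasCompactSupport g) (hs : tsupport g ⊆ Ioi 0) : Integrable (fun x => F x * g x) := by
  have h1 : IntegrableOn F (tsupport g) := hF.integrableOn_compact_subset hs hc
  have h2 : IntegrableOn (fun x => F x * g x) (tsupport g) :=
    h1.mul_continuousOn hg.continuousOn hc
  refine (integrableOn_iff_integrable_of_support_subset ?_).1 h2
  intro x hx
  refine subset_tsupport g ?_
  intro h
  exact hx (by simp [h])

theorem db_setInt {F g : ℝ → ℝ} {S : Set ℝ} (hs : tsupport g ⊆ S) :
    ∫ x in S, F x * g x = ∫ x, F x * g x := by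
  refine setIntegral_eq_integral_of_forall_compl_eq_zero fun x hx => ?_
  rw [image_eq_zero_of_notMem_tsupport (fun h => hx (hs h)), mul_zero]

/-- du Bois-Reymond lemma on the half line. -/
theorem db_const {F : ℝ → ℝ} (hF : LocallyIntegrableOn F (Ioi 0))
    (h : ∀ φ : ℝ → ℝ, ContDiff ℝ (⊤ : ℕ∞) φ → HasCompactSupport φ → tsupport φ ⊆ Ioi 0 →
      ∫ x, F x * deriv φ x = 0) :
    ∃ c : ℝ, ∀ᵐ x, x ∈ Ioi (0:ℝ) → F x - c = 0 := by
  let ψb : ContDiffBump (2:ℝ) := ⟨1/2, 1, by norm_num, by norm_num⟩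
  let ψ : ℝ → ℝ := ψb.normed volume
  have hψ : ContDiff ℝ (⊤ : ℕ∞) ψ := ψb.contDiff_normed
  have hψc : HasCompactSupport ψ := ψb.hasCompactSupport_normed
  have hψs : tsupport ψ ⊆ Ioi 0 := by
    rw [ψb.tsupport_normed_eq]
    intro x hx
    have : |x - 2| ≤ 1 := by simpa [Real.dist_eq, ψb] using hx
    have := (abs_le.1 this).1
    simp only [mem_Ioi]; linarith
  have hψi : ∫ x, ψ x = 1 := ψb.integral_normed
  refine ⟨∫ x, F x * ψ x, ?_⟩
  refine isOpen_Ioi.ae_eq_zero_of_integral_contDiff_smul_eq_zero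
    (hF.sub ((continuous_const).locallyIntegrable.locallyIntegrableOn _)) ?_
  intro g hg hgc hgs
  have hgi : Integrable g := hg.continuous.integrable_of_hasCompactSupport hgc
  have hψin : Integrable ψ := hψ.continuous.integrable_of_hasCompactSupport hψc
  set J := ∫ x, g x with hJ
  let η : ℝ → ℝ := fun x => g x - J * ψ x
  have hη : ContDiff ℝ (⊤ : ℕ∞) η := hg.sub (contDiff_const.mul hψ)
  have hηi : Integrable η := hgi.sub (hψin.const_mul J)
  have hη0 : ∫ x, η x = 0 := by
    rw [integral_sub hgi (hψin.const_mul J), integral_const_mul, hψi]; simp [hJ]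
  obtain ⟨a, b, ha0, ha1, hb1, hab⟩ := db_bounds (K := tsupport g ∪ tsupport ψ)
    (IsCompact.union hgc hψc) (union_subset hgs hψs)
  have hηz : ∀ x, x ∉ Ioo a b → η x = 0 := by
    intro x hx
    have h1 : g x = 0 := image_eq_zero_of_notMem_tsupport (fun h => hx (hab (Or.inl h)))
    have h2 : ψ x = 0 := image_eq_zero_of_notMem_tsupport (fun h => hx (hab (Or.inr h)))
    simp [η, h1, h2]
  let φ : ℝ → ℝ := fun x => ∫ t in (0:ℝ)..x, η t
  have hderiv : ∀ x, HasDerivAt φ (η x) x := fun x =>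
    hη.continuous.integral_hasStrictDerivAt 0 x |>.hasDerivAt
  have hd : deriv φ = η := funext fun x => (hderiv x).deriv
  have hφ : ContDiff ℝ (⊤ : ℕ∞) φ := by
    rw [contDiff_infty_iff_deriv]
    exact ⟨fun x => (hderiv x).differentiableAt, by rw [hd]; exact hη⟩
  have hφs : Function.support φ ⊆ Icc a b := by
    intro x hx
    by_contra hn
    apply hx
    rw [mem_Icc, not_and_or, not_le, not_le] at hn
    change ∫ t in (0:ℝ)..x, η t = 0
    rcases hn with hn | hn
    · refine (intervalIntegral.integral_congr (g := fun _ => 0) ?_).trans (by simp)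
      intro t ht
      refine hηz t (fun h => ?_)
      rcases le_total 0 x with h' | h'
      · rw [uIcc_of_le h'] at ht; linarith [h.1, ht.2]
      · rw [uIcc_of_ge h'] at ht; linarith [h.1, ht.2]
    · rw [intervalIntegral.integral_of_le (by linarith), ← hη0]
      refine setIntegral_eq_integral_of_forall_compl_eq_zero fun t ht => hηz t fun h => ht ?_
      exact ⟨by linarith [h.1], by linarith [h.2]⟩
  have hφt : tsupport φ ⊆ Icc a b := closure_minimal hφs isClosed_Icc
  have hφc : HasCompactSupport φ := HasCompactSupport.of_support_subset_isCompact isCompact_Icc hφs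
  have key := h φ hφ hφc (hφt.trans fun x hx => lt_of_lt_of_le ha0 hx.1)
  rw [hd] at key
  have i1 := db_int_mul hF hg.continuous hgc hgs
  have i2 := db_int_mul hF hψ.continuous hψc hψs
  have e1 : ∫ x, F x * η x = (∫ x, F x * g x) - J * ∫ x, F x * ψ x := by
    rw [← integral_const_mul, ← integral_sub i1 (i2.const_mul J)]
    congr 1; ext x; simp only [η]; ring
  have e2 : ∫ x, g x • (F x - ∫ x, F x * ψ x) = (∫ x, F x * g x) - J * ∫ x, F x * ψ x := by
    rw [hJ, ← integral_mul_const, ← integral_sub i1 (hgi.mul_const _)]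
    congr 1; ext x; simp only [smul_eq_mul]; ring
  exact e2.trans (e1.symm.trans key)

theorem db_prim {u : ℝ → ℝ} (hu : LocallyIntegrableOn u (Ioi 0)) (a b : ℝ) (ha : 0 < a) (hb : 0 < b) :
    IntervalIntegrable u volume a b := by
  rw [intervalIntegrable_iff]
  refine (hu.integrableOn_compact_subset (t := uIcc a b) ?_ isCompact_uIcc).mono_set uIoc_subset_uIcc
  intro x hx
  exact lt_of_lt_of_le (lt_min ha hb) hx.1

theorem db_prim_loc {u : ℝ → ℝ} (hu : LocallyIntegrableOn u (Ioi 0)) :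
    LocallyIntegrableOn (fun x => ∫ t in (1:ℝ)..x, u t) (Ioi 0) := by
  refine ContinuousOn.locallyIntegrableOn ?_ measurableSet_Ioi
  intro x hx
  have hx : 0 < x := hx
  have hm : 0 < min (x/2) 1 := by positivity
  have hM : 0 < max (x+1) 1 := by positivity
  have := ((db_prim hu (min (x/2) 1) (max (x+1) 1) hm hM).absolutelyContinuousOnInterval_intervalIntegral
    (c := 1) (by rw [uIcc_of_le (by simp)]; simp)).continuousOn
  refine (this.continuousAt ?_).continuousWithinAt
  rw [uIcc_of_le (by simp)]
  refine Icc_mem_nhds ?_ ?_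
  · exact (min_le_left _ _).trans_lt (by linarith)
  · exact lt_of_lt_of_le (by linarith) (le_max_left _ _)

theorem db_parts {u φ : ℝ → ℝ} (hu : LocallyIntegrableOn u (Ioi 0))
    (hφ : ContDiff ℝ (⊤ : ℕ∞) φ) (hc : HasCompactSupport φ) (hs : tsupport φ ⊆ Ioi 0) :
    ∫ x, (∫ t in (1:ℝ)..x, u t) * deriv φ x = - ∫ x, u x * φ x := by
  obtain ⟨a, b, ha0, ha1, hb1, hab⟩ := db_bounds (K := tsupport φ) hc hs
  have hle : a ≤ b := by linarith
  have hi := db_prim hu a b ha0 (by linarith)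
  have h1mem : (1:ℝ) ∈ uIcc a b := by rw [uIcc_of_le hle]; exact ⟨ha1.le, hb1.le⟩
  have hac := hi.absolutelyContinuousOnInterval_intervalIntegral h1mem
  have hφac : AbsolutelyContinuousOnInterval φ a b :=
    ContDiffOn.absolutelyContinuousOnInterval (hφ.of_le (by exact_mod_cast le_top)).contDiffOn
  have key := hac.integral_mul_deriv_eq_deriv_mul hφac
  have za : φ a = 0 := image_eq_zero_of_notMem_tsupport fun h => lt_irrefl _ (hab h).1
  have zb : φ b = 0 := image_eq_zero_of_notMem_tsupport fun h => lt_irrefl _ (hab h).2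
  rw [za, zb] at key
  have hsub : tsupport φ ⊆ Ioc a b := hab.trans Ioo_subset_Ioc_self
  have e1 : ∫ x in a..b, deriv (fun x => ∫ t in (1:ℝ)..x, u t) x * φ x = ∫ x in a..b, u x * φ x := by
    refine intervalIntegral.integral_congr_ae ?_
    filter_upwards [hi.ae_hasDerivAt_integral] with x hx hx'
    rw [(hx (uIoc_subset_uIcc hx') 1 h1mem).deriv]
  rw [e1, intervalIntegral.integral_of_le hle, intervalIntegral.integral_of_le hle,
    db_setInt hsub, db_setInt (F := fun x => ∫ t in (1:ℝ)..x, u t)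
      ((tsupport_deriv_subset).trans hsub)] at key
  rw [key]; ring

theorem hb_ext {V E : Type*} [AddCommGroup V] [Module ℝ V] [NormedAddCommGroup E] [NormedSpace ℝ E]
    (T : V →ₗ[ℝ] E) (l : V →ₗ[ℝ] ℝ) (C : ℝ) (hC : 0 ≤ C) (h : ∀ v, |l v| ≤ C * ‖T v‖) :
    ∃ L : E →L[ℝ] ℝ, ‖L‖ ≤ C ∧ ∀ v, L (T v) = l v := by
  obtain ⟨s, hs⟩ := T.rangeRestrict.exists_rightInverse_of_surjective T.range_rangeRestrict
  have hs' : ∀ y : T.range, T (s y) = y := by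
    intro y
    have := congrArg (fun g => ((g y : T.range) : E)) hs
    simpa using this
  let g0 : T.range →ₗ[ℝ] ℝ := l.comp s
  have hb : ∀ y : T.range, ‖g0 y‖ ≤ C * ‖y‖ := by
    intro y
    have := h (s y)
    rw [hs'] at this
    exact this
  let g : StrongDual ℝ T.range := g0.mkContinuous C hb
  obtain ⟨L, hL, hn⟩ := exists_extension_norm_eq T.range g
  refine ⟨L, ?_, ?_⟩
  · rw [hn]; exact LinearMap.mkContinuous_norm_le _ hC _
  · intro v
    have h1 := hL ⟨T v, v, rfl⟩
    rw [show L (T v) = L ((⟨T v, v, rfl⟩ : T.range) : E) from rfl, h1]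
    change l (s ⟨T v, v, rfl⟩) = l v
    have h2 := h (s ⟨T v, v, rfl⟩ - v)
    rw [map_sub, map_sub, hs'] at h2
    simp only [sub_self, norm_zero, mul_zero] at h2
    exact sub_eq_zero.1 (abs_nonpos_iff.1 h2)

/-- Test functions on the half line. -/
def testSub : Submodule ℝ (ℝ → ℝ) where
  carrier := {φ | ContDiff ℝ (⊤ : ℕ∞) φ ∧ HasCompactSupport φ ∧ tsupport φ ⊆ Ioi 0}
  add_mem' := by
    rintro f g ⟨h1, h2, h3⟩ ⟨k1, k2, k3⟩
    exact ⟨h1.add k1, h2.add k2, (tsupport_add f g).trans (union_subset h3 k3)⟩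
  zero_mem' := ⟨contDiff_const, HasCompactSupport.zero, by simp [tsupport]⟩
  smul_mem' := by
    rintro c f ⟨h1, h2, h3⟩
    refine ⟨contDiff_const.smul h1, h2.smul_left (f := fun _ => c), ?_⟩
    exact (tsupport_smul_subset_right (fun _ => c) f).trans h3

theorem wt_eLpNorm (q r : ℝ) (hr : 0 < r) (μ : Measure ℝ) (g : ℝ → ℝ) :
    eLpNorm g (ENNReal.ofReal r) (μ.withDensity fun x => ENNReal.ofReal (Real.exp (-q * x))) =
      eLpNorm (fun x => g x * Real.exp (-(q / r) * x)) (ENNReal.ofReal r) μ := by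
  have h0 : ENNReal.ofReal r ≠ 0 := by simpa using hr
  rw [eLpNorm_eq_lintegral_rpow_enorm_toReal h0 ENNReal.ofReal_ne_top,
    eLpNorm_eq_lintegral_rpow_enorm_toReal h0 ENNReal.ofReal_ne_top, ENNReal.toReal_ofReal hr.le]
  congr 1
  rw [lintegral_withDensity_eq_lintegral_mul_non_measurable _ (by fun_prop) (by simp)]
  refine lintegral_congr fun x => ?_
  simp only [Pi.mul_apply]
  rw [enorm_mul, ENNReal.mul_rpow_of_nonneg _ _ hr.le, mul_comm]
  congr 1
  rw [Real.enorm_of_nonneg (Real.exp_pos _).le, ENNReal.ofReal_rpow_of_nonneg (Real.exp_pos _).le hr.le,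
    ← Real.exp_mul]
  congr 2
  field_simp

open Filter Topology in
theorem exists_density
    (p p' C : ℝ) (hpq : p.HolderConjugate p') (hC : 0 ≤ C)
    (v₁ f : ℝ → ℝ)
    (hv₁ : LocallyIntegrableOn (fun x => |1 / v₁ x| ^ p') (Set.Ioi 0))
    (hf : LocallyIntegrableOn f (Set.Ioi 0))
    (hbound : ∀ φ : ℝ → ℝ, ContDiff ℝ (⊤ : ℕ∞) φ → HasCompactSupport φ →
      tsupport φ ⊆ Set.Ioi 0 →
      |∫ x in Set.Ioi 0, f x * deriv φ x|
        ≤ C * (∫ x in Set.Ioi 0, |φ x / v₁ x| ^ p') ^ (1/p')) :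
    ∃ u : ℝ → ℝ, LocallyIntegrableOn u (Ioi 0) ∧
      eLpNorm (fun x => v₁ x * u x) (ENNReal.ofReal p) (volume.restrict (Set.Ioi 0))
        ≤ ENNReal.ofReal C ∧
      ∀ φ : ℝ → ℝ, ContDiff ℝ (⊤ : ℕ∞) φ → HasCompactSupport φ → tsupport φ ⊆ Ioi 0 →
        ∫ x, f x * deriv φ x = - ∫ x, u x * φ x := by
  have hp0 := hpq.pos
  have hq0 := hpq.symm.pos
  have hQ0 : ENNReal.ofReal p' ≠ 0 := by simpa using hq0
  have : Fact (1 ≤ ENNReal.ofReal p') := ⟨by simpa using hpq.symm.lt.le⟩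
  have : ENNReal.HolderConjugate (ENNReal.ofReal p) (ENNReal.ofReal p') := hpq.ennrealOfReal
  set μ : Measure ℝ := volume.restrict (Ioi 0) with hμ
  set ν : Measure ℝ := μ.withDensity fun x => ENNReal.ofReal (Real.exp (-p' * x)) with hν
  have hνfin : IsFiniteMeasure ν :=
    isFiniteMeasure_withDensity_ofReal (integrableOn_exp_mul_Ioi (by linarith) 0).2
  have hνac : ν ≪ μ := withDensity_absolutelyContinuous _ _
  set w : ℝ → ℝ := fun x => |1 / v₁ x| with hw
  have hwm : AEStronglyMeasurable w μ := by
    have h1 : AEMeasurable (fun x => |1 / v₁ x| ^ p') μ := hv₁.aestronglyMeasurable.aemeasurable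
    have h2 : w = fun x => (|1 / v₁ x| ^ p') ^ (p'⁻¹) := by
      ext x; rw [Real.rpow_rpow_inv (abs_nonneg _) hq0.ne']
    rw [h2]
    exact (h1.pow_const _).aestronglyMeasurable
  -- the weighted test functions
  have hφw : ∀ φ ∈ testSub, MemLp (fun x => φ x * w x) (ENNReal.ofReal p') μ := by
    rintro φ ⟨h1, h2, h3⟩
    have hms : AEStronglyMeasurable (fun x => φ x * w x) μ :=
      h1.continuous.aestronglyMeasurable.mul hwm
    rw [← integrable_norm_rpow_iff hms hQ0 ENNReal.ofReal_ne_top,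
      ENNReal.toReal_ofReal hq0.le]
    have hg : Continuous (fun x => |φ x| ^ p') := h1.continuous.abs.rpow_const (fun _ => Or.inr hq0.le)
    have hsub : Function.support (fun x => |φ x| ^ p') ⊆ Function.support φ := by
      intro x hx h
      exact hx (by simp [h, Real.zero_rpow hq0.ne'])
    have := db_int_mul hv₁ hg (h2.mono hsub) ((closure_mono hsub).trans h3)
    refine (this.mono_measure Measure.restrict_le_self).congr (Eventually.of_forall fun x => ?_)
    simp only [Real.norm_eq_abs, abs_mul, hw, abs_abs]
    rw [Real.mul_rpow (abs_nonneg _) (abs_nonneg _), mul_comm]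
  have hcancel : ∀ φ : ℝ → ℝ, (fun x => φ x * w x * Real.exp x * Real.exp (-(p'/p') * x)) = fun x => φ x * w x := by
    intro φ; ext x
    rw [mul_assoc, ← Real.exp_add, div_self hq0.ne']; simp
  have hnorm : ∀ φ : ℝ → ℝ, eLpNorm (fun x => φ x * w x * Real.exp x) (ENNReal.ofReal p') ν =
      eLpNorm (fun x => φ x * w x) (ENNReal.ofReal p') μ := by
    intro φ
    rw [hν, wt_eLpNorm p' p' hq0, hcancel]
  have hT : ∀ φ ∈ testSub, MemLp (fun x => φ x * w x * Real.exp x) (ENNReal.ofReal p') ν := by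
    intro φ hφ
    refine ⟨(((hφw φ hφ).1.mul Real.continuous_exp.aestronglyMeasurable).mono_ac hνac), ?_⟩
    rw [hnorm]; exact (hφw φ hφ).2
  let T : testSub →ₗ[ℝ] Lp ℝ (ENNReal.ofReal p') ν :=
    { toFun := fun φ => (hT φ φ.2).toLp
      map_add' := by
        intro φ ψ
        rw [← MemLp.toLp_add]
        refine MemLp.toLp_congr _ _ (Eventually.of_forall fun x => ?_)
        simp only [Submodule.coe_add, Pi.add_apply]; ring
      map_smul' := by
        intro c φ
        rw [RingHom.id_apply, ← MemLp.toLp_const_smul]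
        refine MemLp.toLp_congr _ _ (Eventually.of_forall fun x => ?_)
        simp only [Submodule.coe_smul, Pi.smul_apply, smul_eq_mul]; ring }
  have hdint : ∀ φ ∈ testSub, Integrable (fun x => f x * deriv φ x) := by
    rintro φ ⟨h1, h2, h3⟩
    exact db_int_mul hf (h1.continuous_deriv (by exact_mod_cast le_top)) h2.deriv
      ((tsupport_deriv_subset).trans h3)
  have hdiff : ∀ φ ∈ testSub, Differentiable ℝ φ := by
    rintro φ ⟨h1, h2, h3⟩
    exact h1.differentiable (by simp)
  let l : testSub →ₗ[ℝ] ℝ :=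
    { toFun := fun φ => - ∫ x, f x * deriv φ x
      map_add' := by
        intro φ ψ
        rw [← neg_add, ← integral_add (hdint φ φ.2) (hdint ψ ψ.2)]
        congr 2; ext x
        rw [Submodule.coe_add, deriv_add (hdiff φ φ.2 x) (hdiff ψ ψ.2 x)]; ring
      map_smul' := by
        intro c φ
        rw [RingHom.id_apply, smul_eq_mul, mul_neg, ← integral_const_mul]
        congr 2; ext x
        rw [Submodule.coe_smul, deriv_const_smul c (hdiff φ φ.2 x), smul_eq_mul]; ring }
  have hTn : ∀ φ : testSub, ‖T φ‖ = (∫ x in Set.Ioi 0, |(φ : ℝ → ℝ) x / v₁ x| ^ p') ^ (1/p') := by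
    intro φ
    change ‖(hT φ φ.2).toLp‖ = _
    rw [Lp.norm_toLp, hnorm, (hφw φ φ.2).eLpNorm_eq_integral_rpow_norm hQ0 ENNReal.ofReal_ne_top,
      ENNReal.toReal_ofReal (by positivity), ENNReal.toReal_ofReal hq0.le, one_div]
    congr 2; ext x
    congr 1
    rw [Real.norm_eq_abs, abs_mul, hw, abs_abs, ← abs_mul, mul_one_div]
  obtain ⟨L, hLn, hL⟩ := hb_ext T l C hC (by
    intro φ
    rw [hTn]
    obtain ⟨h1, h2, h3⟩ := φ.2
    refine le_trans (le_of_eq ?_) (hbound φ h1 h2 h3)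
    change |-∫ x, f x * deriv φ x| = _
    rw [abs_neg, db_setInt ((tsupport_deriv_subset).trans h3)])
  obtain ⟨k, hkm, hkn, hk⟩ := rz_main ν p p' hpq L
  have hkn' : eLpNorm (fun x => k x * Real.exp (-(p'/p) * x)) (ENNReal.ofReal p) μ ≤ ENNReal.ofReal C := by
    rw [← wt_eLpNorm p' p hp0]
    exact hkn.trans (ENNReal.ofReal_le_ofReal hLn)
  have hkL : MemLp (fun x => k x * Real.exp (-(p'/p) * x)) (ENNReal.ofReal p) μ :=
    ⟨(hkm.mul (by fun_prop)).aestronglyMeasurable, hkn'.trans_lt ENNReal.ofReal_lt_top⟩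
  refine ⟨fun x => w x * (k x * Real.exp (-(p'/p) * x)), ?_, ?_, ?_⟩
  · rw [locallyIntegrableOn_iff isOpen_Ioi.isLocallyClosed]
    intro K hK hKc
    have hle : volume.restrict K ≤ μ := Measure.restrict_mono hK le_rfl
    have hwK : MemLp w (ENNReal.ofReal p') (volume.restrict K) := by
      rw [← integrable_norm_rpow_iff (hwm.mono_measure hle) hQ0 ENNReal.ofReal_ne_top,
        ENNReal.toReal_ofReal hq0.le]
      refine (hv₁.integrableOn_compact_subset hK hKc).congr (Eventually.of_forall fun x => ?_)
      simp [hw]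
    have := (hkL.mono_measure hle).integrable_mul hwK
    refine this.congr (Eventually.of_forall fun x => ?_)
    simp only [Pi.mul_apply]; ring
  · refine le_trans (eLpNorm_mono fun x => ?_) hkn'
    rw [← mul_assoc, norm_mul]
    refine mul_le_of_le_one_left (norm_nonneg _) ?_
    rw [norm_mul, hw]
    simp only [Real.norm_eq_abs, abs_abs]
    rw [← abs_mul, mul_one_div]
    rcases eq_or_ne (v₁ x) 0 with h | h
    · simp [h]
    · simp [h]
  · intro φ h1 h2 h3
    have e := hL ⟨φ, h1, h2, h3⟩
    rw [hk] at e
    change _ = -∫ x, f x * deriv φ x at e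
    rw [← neg_eq_iff_eq_neg.2 e.symm.symm] 
    congr 1
    rw [← db_setInt (F := fun x => w x * (k x * Real.exp (-(p'/p) * x))) h3]
    have e2 : ∫ x, k x * T ⟨φ, h1, h2, h3⟩ x ∂ν = ∫ x, k x * (φ x * w x * Real.exp x) ∂ν := by
      refine integral_congr_ae ?_
      filter_upwards [(hT φ ⟨h1, h2, h3⟩).coeFn_toLp] with x hx
      exact congrArg (fun y => k x * y) hx
    rw [e2, hν, integral_withDensity_eq_integral_toReal_smul (by fun_prop) (by simp)]
    refine integral_congr_ae (Eventually.of_forall fun x => ?_)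
    simp only [smul_eq_mul]
    rw [ENNReal.toReal_ofReal (Real.exp_pos _).le]
    have : Real.exp (-(p'/p) * x) = Real.exp (-p' * x) * Real.exp x := by
      rw [← Real.exp_add]; congr 1
      have : p'/p = p' - 1 := by
        have := hpq.sub_one_mul_conj
        have h3 := hpq.mul_eq_add
        field_simp; linarith
      rw [this]; ring
    rw [this]; ring

/-- Core of Lemma 7 (Em2): if `|∫ f φ'| ≤ C ‖φ/v₁‖_{p'}` for all test functions
`φ ∈ C_0^∞(0,∞)`, then `f` coincides a.e. on `(0,∞)` with a locally absolutely continuous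
function `f̃` whose derivative `u` satisfies `‖v₁ u‖_p ≤ C`. -/
theorem distributional_derivative_representation
    (p p' C : ℝ) (hp : 1 < p) (hp' : p' = p / (p - 1)) (hC : 0 ≤ C)
    (v₁ f : ℝ → ℝ)
    (hv₁ : LocallyIntegrableOn (fun x => |1 / v₁ x| ^ p') (Set.Ioi 0))
    (hf : LocallyIntegrableOn f (Set.Ioi 0))
    (hbound : ∀ φ : ℝ → ℝ, ContDiff ℝ (⊤ : ℕ∞) φ → HasCompactSupport φ →
      tsupport φ ⊆ Set.Ioi 0 →
      |∫ x in Set.Ioi 0, f x * deriv φ x|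
        ≤ C * (∫ x in Set.Ioi 0, |φ x / v₁ x| ^ p') ^ (1/p')) :
    ∃ ftilde u : ℝ → ℝ,
      f =ᵐ[volume.restrict (Set.Ioi 0)] ftilde ∧
      (∀ a b : ℝ, 0 < a → a ≤ b →
        IntervalIntegrable u volume a b ∧ ftilde b - ftilde a = ∫ x in a..b, u x) ∧
      eLpNorm (fun x => v₁ x * u x) (ENNReal.ofReal p) (volume.restrict (Set.Ioi 0))
        ≤ ENNReal.ofReal C := by
  have hpq : p.HolderConjugate p' := by
    rw [hp']; exact Real.HolderConjugate.conjExponent hp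
  obtain ⟨u, hu, hun, hw⟩ := exists_density p p' C hpq hC v₁ f hv₁ hf hbound
  have hprim := db_prim_loc hu
  obtain ⟨c, hc⟩ := db_const (F := fun x => f x - ∫ t in (1:ℝ)..x, u t) (hf.sub hprim) (by
    intro φ h1 h2 h3
    have hd := h1.continuous_deriv (by exact_mod_cast le_top)
    have hs : tsupport (deriv φ) ⊆ Ioi 0 := (tsupport_deriv_subset).trans h3
    have i1 := db_int_mul hf hd h2.deriv hs
    have i2 := db_int_mul hprim hd h2.deriv hs
    simp only [sub_mul]
    rw [integral_sub i1 i2, hw φ h1 h2 h3, db_parts hu h1 h2 h3, sub_self])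
  refine ⟨fun x => (∫ t in (1:ℝ)..x, u t) + c, u, ?_, ?_, hun⟩
  · rw [Filter.EventuallyEq, ae_restrict_iff' measurableSet_Ioi]
    filter_upwards [hc] with x hx hx0
    have := hx hx0
    linarith
  · intro a b ha hab
    have hb : 0 < b := lt_of_lt_of_le ha hab
    refine ⟨db_prim hu a b ha hb, ?_⟩
    rw [← intervalIntegral.integral_interval_sub_left (db_prim hu 1 b one_pos hb)
      (db_prim hu 1 a one_pos ha)]
    ring
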